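/- There exists a constant C > 0, depending only on α and β, such that for every real Dirichlet quasimode datum (u, λ, f) on the stadium S, one has ∫_S (∂_x u)² dA ≤ C ∫_{∂S ∩ W} w |∂_N u|² dl + C ‖f‖²_{L²(S)}. -/

import Mathlib

open MeasureTheory Real Set Filter

noncomputable section

/-- Partial derivative in the first (x) variable. -/
def pdx (u : ℝ × ℝ → ℝ) (p : ℝ × ℝ) : ℝ := deriv (fun t => u (t, p.2)) p.1

/-- Partial derivative in the second (y) variable. -/
def pdy (u : ℝ × ℝ → ℝ) (p : ℝ × ℝ) : ℝ := deriv (fun t => u (p.1, t)) p.2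

/-- The positive Laplacian `Δu = -u_xx - u_yy`. -/
def lap (u : ℝ × ℝ → ℝ) (p : ℝ × ℝ) : ℝ := -(pdx (pdx u) p) - (pdy (pdy u) p)

/-- The central rectangle `R = [-α,α] × [-β,β]`. -/
def Rect (α β : ℝ) : Set (ℝ × ℝ) := Icc (-α) α ×ˢ Icc (-β) β

/-- The wings `W = W₊ ∪ W₋`, two half-discs of radius β centered at `(±α, 0)`. -/
def Wings (α β : ℝ) : Set (ℝ × ℝ) :=
  {p | (p.1 - α) ^ 2 + p.2 ^ 2 ≤ β ^ 2 ∧ α ≤ p.1} ∪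
  {p | (p.1 + α) ^ 2 + p.2 ^ 2 ≤ β ^ 2 ∧ p.1 ≤ -α}

/-- The Bunimovich stadium `S = R ∪ W`. -/
def Stadium (α β : ℝ) : Set (ℝ × ℝ) := Rect α β ∪ Wings α β

/-- The boundary `∂S`: two horizontal segments and two semicircles. -/
def StadiumBoundary (α β : ℝ) : Set (ℝ × ℝ) :=
  {p | |p.1| ≤ α ∧ (p.2 = β ∨ p.2 = -β)} ∪
  {p | (|p.1| - α) ^ 2 + p.2 ^ 2 = β ^ 2 ∧ α ≤ |p.1|}

/-- Boundary integral `∫_{∂S} g dl` of an integrand `g` depending on the boundary point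
and the outward unit normal at that point. -/
def bdryInt (α β : ℝ) (g : ℝ × ℝ → ℝ × ℝ → ℝ) : ℝ :=
  (∫ x in (-α)..α, (g (x, β) (0, 1) + g (x, -β) (0, -1))) +
  β * ∫ θ in (-(π / 2))..(π / 2),
    (g (α + β * cos θ, β * sin θ) (cos θ, sin θ) +
     g (-(α + β * cos θ), β * sin θ) (-cos θ, sin θ))

/-- Boundary integral `∫_{∂S ∩ W} g dl` over the two semicircles only. -/
def bdryIntW (α β : ℝ) (g : ℝ × ℝ → ℝ × ℝ → ℝ) : ℝ :=
  β * ∫ θ in (-(π / 2))..(π / 2),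
    (g (α + β * cos θ, β * sin θ) (cos θ, sin θ) +
     g (-(α + β * cos θ), β * sin θ) (-cos θ, sin θ))

/-- The normal derivative `∂_N u = n₁ ∂_x u + n₂ ∂_y u` at a boundary point `p`
with outward unit normal `n`. -/
def nderiv (u : ℝ × ℝ → ℝ) (p n : ℝ × ℝ) : ℝ := n.1 * pdx u p + n.2 * pdy u p

/-- A real Dirichlet quasimode datum `(u, λ, f)` on the stadium: `λ > 0`, `u` smooth on a
neighborhood of `S`, `u = 0` on `∂S`, and `(Δ - λ²) u = f` on `S`. -/
structure QMDatum (α β : ℝ) where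
  u : ℝ × ℝ → ℝ
  lam : ℝ
  f : ℝ × ℝ → ℝ
  lam_pos : 0 < lam
  smooth : ∃ V : Set (ℝ × ℝ), IsOpen V ∧ Stadium α β ⊆ V ∧ ContDiffOn ℝ (⊤ : ℕ∞) u V
  dirichlet : ∀ p ∈ StadiumBoundary α β, u p = 0
  eqn : ∀ p ∈ Stadium α β, lap u p - lam ^ 2 * u p = f p

theorem pdx_eq {v : ℝ × ℝ → ℝ} (hv : Differentiable ℝ v) (p : ℝ × ℝ) :
    HasDerivAt (fun t => v (t, p.2)) (fderiv ℝ v p (1,0)) p.1 := by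
  have h1 : HasDerivAt (fun t : ℝ => (t, p.2)) ((1:ℝ), (0:ℝ)) p.1 :=
    (hasDerivAt_id p.1).prodMk (hasDerivAt_const _ _)
  exact (hv p).hasFDerivAt.comp_hasDerivAt p.1 h1

theorem pdy_eq {v : ℝ × ℝ → ℝ} (hv : Differentiable ℝ v) (p : ℝ × ℝ) :
    HasDerivAt (fun t => v (p.1, t)) (fderiv ℝ v p (0,1)) p.2 := by
  have h1 : HasDerivAt (fun t : ℝ => (p.1, t)) ((0:ℝ), (1:ℝ)) p.2 :=
    (hasDerivAt_const _ _).prodMk (hasDerivAt_id p.2)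
  exact (hv p).hasFDerivAt.comp_hasDerivAt p.2 h1

theorem sm_diff {v : ℝ × ℝ → ℝ} (hv : ContDiff ℝ (⊤ : ℕ∞) v) : Differentiable ℝ v :=
  hv.differentiable (by simp)

theorem pdx_fd {v : ℝ × ℝ → ℝ} (hv : ContDiff ℝ (⊤ : ℕ∞) v) :
    pdx v = fun p => fderiv ℝ v p (1,0) := by
  ext p; exact (pdx_eq (sm_diff hv) p).deriv

theorem pdy_fd {v : ℝ × ℝ → ℝ} (hv : ContDiff ℝ (⊤ : ℕ∞) v) :
    pdy v = fun p => fderiv ℝ v p (0,1) := by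
  ext p; exact (pdy_eq (sm_diff hv) p).deriv

theorem hasx {v : ℝ × ℝ → ℝ} (hv : ContDiff ℝ (⊤ : ℕ∞) v) (x y : ℝ) :
    HasDerivAt (fun t => v (t, y)) (pdx v (x,y)) x := by
  rw [pdx_fd hv]; exact pdx_eq (sm_diff hv) (x,y)

theorem hasy {v : ℝ × ℝ → ℝ} (hv : ContDiff ℝ (⊤ : ℕ∞) v) (x y : ℝ) :
    HasDerivAt (fun t => v (x, t)) (pdy v (x,y)) y := by
  rw [pdy_fd hv]; exact pdy_eq (sm_diff hv) (x,y)

theorem sm_pdx {v : ℝ × ℝ → ℝ} (hv : ContDiff ℝ (⊤ : ℕ∞) v) :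
    ContDiff ℝ (⊤ : ℕ∞) (pdx v) := by
  rw [pdx_fd hv]
  exact (hv.fderiv_right (m := (⊤ : ℕ∞)) (by simp)).clm_apply contDiff_const

theorem sm_pdy {v : ℝ × ℝ → ℝ} (hv : ContDiff ℝ (⊤ : ℕ∞) v) :
    ContDiff ℝ (⊤ : ℕ∞) (pdy v) := by
  rw [pdy_fd hv]
  exact (hv.fderiv_right (m := (⊤ : ℕ∞)) (by simp)).clm_apply contDiff_const

theorem pd_comm {v : ℝ × ℝ → ℝ} (hv : ContDiff ℝ (⊤ : ℕ∞) v) :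
    pdx (pdy v) = pdy (pdx v) := by
  have hd : Differentiable ℝ (fderiv ℝ v) :=
    (hv.fderiv_right (m := (⊤ : ℕ∞)) (by simp)).differentiable (by simp)
  rw [pdx_fd (sm_pdy hv), pdy_fd (sm_pdx hv), pdx_fd hv, pdy_fd hv]
  ext p
  have hs : IsSymmSndFDerivAt ℝ v p := hv.contDiffAt.isSymmSndFDerivAt (by
    rw [minSmoothness_of_isRCLikeNormedField]
    exact WithTop.coe_le_coe.2 (le_top : (2:ℕ∞) ≤ ⊤))
  have e : ∀ w : ℝ × ℝ, fderiv ℝ (fun p => fderiv ℝ v p w) p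
      = (fderiv ℝ (fderiv ℝ v) p).flip w := by
    intro w
    rw [fderiv_clm_apply (hd p) (by fun_prop)]
    simp
  rw [e, e]
  exact hs.eq _ _

/-- half width -/
def aw (α β y : ℝ) : ℝ := α + √(β^2 - y^2)
/-- half height -/
def bh (α β x : ℝ) : ℝ := √(β^2 - (max (|x| - α) 0)^2)

theorem stad_x {α β : ℝ} (hα : 0 < α) (hβ : 0 < β) :
    Stadium α β = {p | p.2 ∈ Icc (-β) β ∧ p.1 ∈ Icc (-aw α β p.2) (aw α β p.2)} := by
  ext ⟨x, y⟩
  simp only [Stadium, Rect, Wings, mem_union, mem_prod, mem_Icc, mem_ofPred_eq, aw]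
  have h0 := Real.sqrt_nonneg (β^2 - y^2)
  constructor
  · rintro (⟨⟨h1, h2⟩, h3, h4⟩ | ⟨h1, h2⟩ | ⟨h1, h2⟩)
    · exact ⟨⟨h3, h4⟩, by linarith, by linarith⟩
    · have : x - α ≤ √(β^2 - y^2) := Real.le_sqrt_of_sq_le (by linarith)
      have := abs_le_of_sq_le_sq' (show y^2 ≤ β^2 by nlinarith) hβ.le
      exact ⟨this, by linarith, by linarith⟩
    · have : -(x + α) ≤ √(β^2 - y^2) := Real.le_sqrt_of_sq_le (by linarith)
      have := abs_le_of_sq_le_sq' (show y^2 ≤ β^2 by nlinarith) hβ.le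
      exact ⟨this, by linarith, by linarith⟩
  · rintro ⟨⟨h3, h4⟩, h1, h2⟩
    have hy : 0 ≤ β^2 - y^2 := by nlinarith
    have hs := Real.sq_sqrt hy
    by_cases hx : α ≤ x
    · right; left; exact ⟨by nlinarith, hx⟩
    · by_cases hx' : x ≤ -α
      · right; right; exact ⟨by nlinarith, hx'⟩
      · left; exact ⟨⟨by linarith, by linarith⟩, h3, h4⟩

theorem stad_y {α β : ℝ} (hα : 0 < α) (hβ : 0 < β) :
    Stadium α β = {p | p.1 ∈ Icc (-(α+β)) (α+β) ∧ p.2 ∈ Icc (-bh α β p.1) (bh α β p.1)} := by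
  ext ⟨x, y⟩
  simp only [Stadium, Rect, Wings, mem_union, mem_prod, mem_Icc, mem_ofPred_eq, bh]
  constructor
  · rintro (⟨⟨h1, h2⟩, h3, h4⟩ | ⟨h1, h2⟩ | ⟨h1, h2⟩)
    · have : |x| ≤ α := abs_le.2 ⟨h1, h2⟩
      rw [max_eq_right (by linarith)]
      simp only [ne_eq, OfNat.ofNat_ne_zero, not_false_eq_true, zero_pow, sub_zero,
        Real.sqrt_sq hβ.le]
      exact ⟨⟨by linarith, by linarith⟩, h3, h4⟩
    · rw [abs_of_nonneg (by linarith), max_eq_left (by linarith)]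
      have h5 := abs_le_of_sq_le_sq' (show (x-α)^2 ≤ β^2 by nlinarith) hβ.le
      have h6 := abs_le.1 (Real.abs_le_sqrt (show y^2 ≤ β^2 - (x-α)^2 by linarith))
      exact ⟨⟨by linarith, by linarith⟩, h6⟩
    · rw [abs_of_nonpos (by linarith), max_eq_left (by linarith)]
      have h5 := abs_le_of_sq_le_sq' (show (x+α)^2 ≤ β^2 by nlinarith) hβ.le
      have h6 := abs_le.1 (Real.abs_le_sqrt (show y^2 ≤ β^2 - (-x-α)^2 by linarith))
      exact ⟨⟨by linarith, by linarith⟩, h6⟩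
  · rintro ⟨⟨h1, h2⟩, h3⟩
    by_cases hx : α ≤ x
    · rw [abs_of_nonneg (by linarith), max_eq_left (by linarith)] at h3
      have := Real.sq_sqrt (show 0 ≤ β^2 - (x-α)^2 by nlinarith)
      right; left; exact ⟨by nlinarith, hx⟩
    · by_cases hx' : x ≤ -α
      · rw [abs_of_nonpos (by linarith), max_eq_left (by linarith)] at h3
        have := Real.sq_sqrt (show 0 ≤ β^2 - (-x-α)^2 by nlinarith)
        right; right; exact ⟨by nlinarith, hx'⟩
      · have : |x| ≤ α := abs_le.2 ⟨by linarith, by linarith⟩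
        rw [max_eq_right (by linarith)] at h3
        simp only [ne_eq, OfNat.ofNat_ne_zero, not_false_eq_true, zero_pow, sub_zero,
          Real.sqrt_sq hβ.le] at h3
        left; exact ⟨⟨by linarith, by linarith⟩, h3⟩

theorem cont_aw (α β : ℝ) : Continuous (aw α β) := by unfold aw; fun_prop
theorem cont_bh (α β : ℝ) : Continuous (bh α β) := by unfold bh; fun_prop

theorem stad_compact {α β : ℝ} (hα : 0 < α) (hβ : 0 < β) : IsCompact (Stadium α β) := by
  have hc : IsClosed (Stadium α β) := by
    rw [stad_x hα hβ]
    have := cont_aw α β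
    simp only [mem_Icc, ofPred_and]
    exact ((isClosed_le (by fun_prop) (by fun_prop)).inter (isClosed_le (by fun_prop)
      (by fun_prop))).inter ((isClosed_le (by fun_prop) (by fun_prop)).inter
      (isClosed_le (by fun_prop) (by fun_prop)))
  refine (isCompact_Icc (a := -(α+β)) (b := α+β)).prod (isCompact_Icc (a := -β) (b := β))
    |>.of_isClosed_subset hc ?_
  intro p hp
  refine ⟨?_, ?_⟩
  · rw [stad_y hα hβ] at hp; exact hp.1
  · rw [stad_x hα hβ] at hp; exact hp.1

theorem fub_y {A : Set (ℝ × ℝ)} {l h : ℝ} {a : ℝ → ℝ} {G : ℝ × ℝ → ℝ} (hlh : l ≤ h)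
    (ha : ∀ x ∈ Icc l h, 0 ≤ a x) (hA : A = {p | p.1 ∈ Icc l h ∧ p.2 ∈ Icc (-a p.1) (a p.1)})
    (hm : MeasurableSet A) (hG : IntegrableOn G A) :
    ∫ p in A, G p = ∫ x in l..h, ∫ y in (-a x)..(a x), G (x, y) := by
  rw [← integral_indicator hm, Measure.volume_eq_prod, integral_prod]
  · rw [intervalIntegral.integral_of_le hlh, ← integral_Icc_eq_integral_Ioc,
      ← integral_indicator measurableSet_Icc]
    congr 1; ext x
    by_cases hx : x ∈ Icc l h
    · rw [indicator_of_mem hx, intervalIntegral.integral_of_le (by linarith [ha x hx]),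
        ← integral_Icc_eq_integral_Ioc, ← integral_indicator measurableSet_Icc]
      congr 1; ext y
      by_cases hy : y ∈ Icc (-a x) (a x)
      · rw [indicator_of_mem hy, indicator_of_mem]; rw [hA]; exact ⟨hx, hy⟩
      · rw [indicator_of_notMem hy, indicator_of_notMem]; rw [hA]; exact fun h => hy h.2
    · rw [indicator_of_notMem hx]
      rw [← integral_zero ℝ ℝ (μ := volume)]
      congr 1; ext y
      rw [indicator_of_notMem]; rw [hA]; exact fun h => hx h.1
  · rw [← Measure.volume_eq_prod]; exact hG.integrable_indicator hm

theorem fub_x {A : Set (ℝ × ℝ)} {l h : ℝ} {a : ℝ → ℝ} {G : ℝ × ℝ → ℝ} (hlh : l ≤ h)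
    (ha : ∀ x ∈ Icc l h, 0 ≤ a x) (hA : A = {p | p.2 ∈ Icc l h ∧ p.1 ∈ Icc (-a p.2) (a p.2)})
    (hm : MeasurableSet A) (hG : IntegrableOn G A) :
    ∫ p in A, G p = ∫ y in l..h, ∫ x in (-a y)..(a y), G (x, y) := by
  rw [← integral_indicator hm, Measure.volume_eq_prod, integral_prod_symm]
  · rw [intervalIntegral.integral_of_le hlh, ← integral_Icc_eq_integral_Ioc,
      ← integral_indicator measurableSet_Icc]
    congr 1; ext x
    by_cases hx : x ∈ Icc l h
    · rw [indicator_of_mem hx, intervalIntegral.integral_of_le (by linarith [ha x hx]),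
        ← integral_Icc_eq_integral_Ioc, ← integral_indicator measurableSet_Icc]
      congr 1; ext y
      by_cases hy : y ∈ Icc (-a x) (a x)
      · rw [indicator_of_mem hy, indicator_of_mem]; rw [hA]; exact ⟨hx, hy⟩
      · rw [indicator_of_notMem hy, indicator_of_notMem]; rw [hA]; exact fun h => hy h.2
    · rw [indicator_of_notMem hx]
      rw [← integral_zero ℝ ℝ (μ := volume)]
      congr 1; ext y
      rw [indicator_of_notMem]; rw [hA]; exact fun h => hx h.1
  · rw [← Measure.volume_eq_prod]; exact hG.integrable_indicator hm

theorem divx {α β : ℝ} (hα : 0 < α) (hβ : 0 < β) {P : ℝ × ℝ → ℝ}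
    (hP : ContDiff ℝ (⊤ : ℕ∞) P) :
    ∫ p in Stadium α β, pdx P p = ∫ θ in (-(π/2))..(π/2),
      (P (α + β * cos θ, β * sin θ) - P (-(α + β * cos θ), β * sin θ)) * (β * cos θ) := by
  have hc := stad_compact hα hβ
  have hPx := (sm_pdx hP).continuous
  have hPc := hP.continuous
  have hac := cont_aw α β
  rw [fub_x (by linarith) (fun y _ => by unfold aw; positivity) (stad_x hα hβ) hc.measurableSet
    (hPx.continuousOn.integrableOn_compact hc)]
  have h1 : ∀ y, ∫ x in (-aw α β y)..(aw α β y), pdx P (x, y)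
      = P (aw α β y, y) - P (-aw α β y, y) := by
    intro y
    rw [intervalIntegral.integral_eq_sub_of_hasDerivAt (f := fun t => P (t, y))
      (fun x _ => hasx hP x y)]
    exact Continuous.intervalIntegrable (by fun_prop) _ _
  simp only [h1]
  have h2 := intervalIntegral.integral_comp_mul_deriv (a := -(π/2)) (b := π/2)
    (f := fun θ => β * sin θ) (f' := fun θ => β * cos θ)
    (g := fun y => P (aw α β y, y) - P (-aw α β y, y))
    (fun θ _ => (hasDerivAt_sin θ).const_mul β) (by fun_prop) (by fun_prop)
  simp only [sin_neg, sin_pi_div_two, mul_neg, mul_one] at h2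
  rw [← h2]
  refine intervalIntegral.integral_congr fun θ hθ => ?_
  rw [uIcc_of_le (by linarith [pi_pos])] at hθ
  have hcos := cos_nonneg_of_mem_Icc hθ
  have : aw α β (β * sin θ) = α + β * cos θ := by
    unfold aw
    rw [show β^2 - (β * sin θ)^2 = (β * cos θ)^2 by nlinarith [sin_sq_add_cos_sq θ],
      Real.sqrt_sq (by positivity)]
  simp only [Function.comp, this]

theorem divy {α β : ℝ} (hα : 0 < α) (hβ : 0 < β) {Q : ℝ × ℝ → ℝ}
    (hQ : ContDiff ℝ (⊤ : ℕ∞) Q) (hQ0 : ∀ x ∈ Icc (-α) α, Q (x, β) = 0 ∧ Q (x, -β) = 0) :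
    ∫ p in Stadium α β, pdy Q p = ∫ θ in (-(π/2))..(π/2),
      (Q (α + β * cos θ, β * sin θ) + Q (-(α + β * cos θ), β * sin θ)) * (β * sin θ) := by
  have hc := stad_compact hα hβ
  have hQy := (sm_pdy hQ).continuous
  have hQc := hQ.continuous
  have hbc := cont_bh α β
  rw [fub_y (by linarith) (fun y _ => by unfold bh; positivity) (stad_y hα hβ) hc.measurableSet
    (hQy.continuousOn.integrableOn_compact hc)]
  have h1 : ∀ x, ∫ y in (-bh α β x)..(bh α β x), pdy Q (x, y)
      = Q (x, bh α β x) - Q (x, -bh α β x) := by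
    intro x
    rw [intervalIntegral.integral_eq_sub_of_hasDerivAt (f := fun t => Q (x, t))
      (fun y _ => hasy hQ x y)]
    exact Continuous.intervalIntegrable (by fun_prop) _ _
  simp only [h1]
  have hg : Continuous (fun x => Q (x, bh α β x) - Q (x, -bh α β x)) := by fun_prop
  have hi : ∀ a b, IntervalIntegrable (fun x => Q (x, bh α β x) - Q (x, -bh α β x)) volume a b :=
    fun a b => hg.intervalIntegrable a b
  rw [← intervalIntegral.integral_add_adjacent_intervals (hi _ (-α)) (hi _ _),
    ← intervalIntegral.integral_add_adjacent_intervals (hi (-α) α) (hi _ _)]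
  have hmid : ∫ x in (-α)..α, (Q (x, bh α β x) - Q (x, -bh α β x)) = 0 := by
    rw [← intervalIntegral.integral_zero (a := -α) (b := α) (μ := volume)]
    refine intervalIntegral.integral_congr fun x hx => ?_
    rw [uIcc_of_le (by linarith)] at hx
    have : bh α β x = β := by
      unfold bh
      rw [max_eq_right (by linarith [abs_le.2 hx])]
      simp [Real.sqrt_sq hβ.le]
    simp only [this, hQ0 x hx, sub_zero]
  have hbθ : ∀ θ ∈ Icc 0 (π/2), bh α β (α + β * cos θ) = β * sin θ
      ∧ bh α β (-(α + β * cos θ)) = β * sin θ := by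
    intro θ hθ
    have hcos := cos_nonneg_of_mem_Icc (show θ ∈ Icc (-(π/2)) (π/2) from
      ⟨by linarith [hθ.1, pi_pos], hθ.2⟩)
    have hsin := sin_nonneg_of_mem_Icc (show θ ∈ Icc 0 π from
      ⟨hθ.1, by linarith [hθ.2, pi_pos]⟩)
    unfold bh
    have hp : 0 ≤ β * cos θ := by positivity
    rw [abs_neg, abs_of_nonneg (by linarith), max_eq_left (by linarith)]
    rw [show β^2 - (α + β * cos θ - α)^2 = (β * sin θ)^2 by nlinarith [sin_sq_add_cos_sq θ],
      Real.sqrt_sq (by positivity)]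
    simp
  have hR : ∫ x in α..(α+β), (Q (x, bh α β x) - Q (x, -bh α β x)) =
      ∫ θ in (0)..(π/2), (Q (α + β * cos θ, β * sin θ) - Q (α + β * cos θ, -(β * sin θ)))
        * (β * sin θ) := by
    have h2 := intervalIntegral.integral_comp_mul_deriv (a := 0) (b := π/2)
      (f := fun θ => α + β * cos θ) (f' := fun θ => β * (-sin θ))
      (fun θ _ => ((hasDerivAt_cos θ).const_mul β).const_add α) (by fun_prop) hg
    simp only [cos_zero, cos_pi_div_two, mul_one, mul_zero, add_zero] at h2
    rw [intervalIntegral.integral_symm, ← h2, ← intervalIntegral.integral_neg]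
    refine intervalIntegral.integral_congr fun θ hθ => ?_
    rw [uIcc_of_le (by linarith [pi_pos])] at hθ
    simp only [Function.comp, (hbθ θ hθ).1]
    ring
  have hL : ∫ x in (-(α+β))..(-α), (Q (x, bh α β x) - Q (x, -bh α β x)) =
      ∫ θ in (0)..(π/2), (Q (-(α + β * cos θ), β * sin θ) - Q (-(α + β * cos θ), -(β * sin θ)))
        * (β * sin θ) := by
    have h2 := intervalIntegral.integral_comp_mul_deriv (a := 0) (b := π/2)
      (f := fun θ => -(α + β * cos θ)) (f' := fun θ => -(β * (-sin θ)))
      (fun θ _ => (((hasDerivAt_cos θ).const_mul β).const_add α).neg) (by fun_prop) hg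
    simp only [cos_zero, cos_pi_div_two, mul_one, mul_zero, add_zero] at h2
    rw [← h2]
    refine intervalIntegral.integral_congr fun θ hθ => ?_
    rw [uIcc_of_le (by linarith [pi_pos])] at hθ
    simp only [Function.comp, (hbθ θ hθ).2]
    ring
  rw [hmid, hR, hL]
  have hj : ∀ a b, IntervalIntegrable (fun θ => (Q (α + β * cos θ, β * sin θ)
      + Q (-(α + β * cos θ), β * sin θ)) * (β * sin θ)) volume a b :=
    fun a b => Continuous.intervalIntegrable (by fun_prop) a b
  rw [← intervalIntegral.integral_add_adjacent_intervals (hj _ 0) (hj _ _)]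
  have hneg := intervalIntegral.integral_comp_neg (a := 0) (b := π/2)
    (fun θ => (Q (α + β * cos θ, β * sin θ)
      + Q (-(α + β * cos θ), β * sin θ)) * (β * sin θ))
  rw [neg_zero] at hneg
  rw [← hneg, zero_add, ← intervalIntegral.integral_add, ← intervalIntegral.integral_add]
  · congr 1; ext θ
    simp only [cos_neg, sin_neg, mul_neg]
    ring
  all_goals exact Continuous.intervalIntegrable (by fun_prop) _ _

theorem alg_aux {X a G V : ℝ} (hX : X^2 ≤ 1) :
    0 ≤ a^2 - 2*X*a*G - V*G + 6*G^2 + V^2/8 + X*V*a/4 := by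
  have h1 : 0 ≤ (a/2 - 2*X*G)^2 := sq_nonneg _
  have h2 : 0 ≤ (V/4 - 2*G)^2 := sq_nonneg _
  have h3 : 0 ≤ (V/4 + X*a/2)^2 := sq_nonneg _
  have h4 : 0 ≤ (1 - X^2) * a^2 := mul_nonneg (by linarith) (sq_nonneg _)
  have h5 : 0 ≤ (a - 2*X*G)^2 := sq_nonneg _
  have h6 : 0 ≤ (1 - X^2) * G^2 := mul_nonneg (by linarith) (sq_nonneg _)
  nlinarith

theorem alg_main {L x a g v : ℝ} (hL : 0 < L) (hx : |x| ≤ L) :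
    a^2 ≤ 6*L^2*g^2 + (2*a^2 - 2*x*a*g - v*g + (v^2 + 2*x*v*a)/(8*L^2)) := by
  have hX : (x/L)^2 ≤ 1 := by
    rw [div_pow, div_le_one (by positivity)]
    exact sq_le_sq' (by linarith [(abs_le.1 hx).1]) (abs_le.1 hx).2
  have h := alg_aux (X := x/L) (a := a) (G := L*g) (V := v/L) hX
  have e : a^2 - 2*(x/L)*a*(L*g) - (v/L)*(L*g) + 6*(L*g)^2 + (v/L)^2/8 + (x/L)*(v/L)*a/4
     = 6*L^2*g^2 + (2*a^2 - 2*x*a*g - v*g + (v^2 + 2*x*v*a)/(8*L^2)) - a^2 := by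
    field_simp
    ring
  linarith

def PP (L l : ℝ) (v : ℝ × ℝ → ℝ) (p : ℝ × ℝ) : ℝ :=
  p.1 * (pdx v p)^2 - p.1 * (pdy v p)^2 + l^2 * (p.1 * (v p)^2) + v p * pdx v p
    + (p.1 * (v p)^2) / (8*L^2)

def QQ (v : ℝ × ℝ → ℝ) (p : ℝ × ℝ) : ℝ :=
  2 * p.1 * pdx v p * pdy v p + v p * pdy v p

theorem sm_PP (L l : ℝ) {v : ℝ × ℝ → ℝ} (hv : ContDiff ℝ (⊤ : ℕ∞) v) :
    ContDiff ℝ (⊤ : ℕ∞) (PP L l v) := by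
  have h1 := sm_pdx hv
  have h2 := sm_pdy hv
  unfold PP
  simp only [div_eq_mul_inv]
  fun_prop

theorem sm_QQ {v : ℝ × ℝ → ℝ} (hv : ContDiff ℝ (⊤ : ℕ∞) v) :
    ContDiff ℝ (⊤ : ℕ∞) (QQ v) := by
  have h1 := sm_pdx hv
  have h2 := sm_pdy hv
  unfold QQ
  fun_prop

theorem pdx_PP (L l : ℝ) {v : ℝ × ℝ → ℝ} (hv : ContDiff ℝ (⊤ : ℕ∞) v) (x y : ℝ) :
    pdx (PP L l v) (x,y) = (pdx v (x,y))^2 + 2*x*pdx v (x,y) * pdx (pdx v) (x,y)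
      - (pdy v (x,y))^2 - 2*x*pdy v (x,y) * pdx (pdy v) (x,y)
      + l^2*((v (x,y))^2 + 2*x*v (x,y) * pdx v (x,y))
      + (pdx v (x,y))^2 + v (x,y) * pdx (pdx v) (x,y)
      + ((v (x,y))^2 + 2*x*v (x,y) * pdx v (x,y))/(8*L^2) := by
  have h := hasx hv x y
  have hx := hasx (sm_pdx hv) x y
  have hy := hasx (sm_pdy hv) x y
  have hi := hasDerivAt_id x
  have := ((((hi.mul (hx.pow 2)).sub (hi.mul (hy.pow 2))).add
    ((hi.mul (h.pow 2)).const_mul (l^2))).add (h.mul hx)).add ((hi.mul (h.pow 2)).div_const (8*L^2))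
  have e : deriv (fun t => PP L l v (t, y)) x = _ := this.deriv
  unfold pdx at e ⊢
  simp only [] at e ⊢
  rw [e]
  simp only [id, Pi.pow_apply]
  push_cast
  ring

theorem pdy_QQ {v : ℝ × ℝ → ℝ} (hv : ContDiff ℝ (⊤ : ℕ∞) v) (x y : ℝ) :
    pdy (QQ v) (x,y) = 2*x*pdy (pdx v) (x,y) * pdy v (x,y) + 2*x*pdx v (x,y) * pdy (pdy v) (x,y)
      + (pdy v (x,y))^2 + v (x,y) * pdy (pdy v) (x,y) := by
  have h := hasy hv x y
  have hx := hasy (sm_pdx hv) x y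
  have hy := hasy (sm_pdy hv) x y
  have := ((hx.const_mul (2*x)).mul hy).add (h.mul hy)
  have e : deriv (fun t => QQ v (x, t)) y = _ := this.deriv
  unfold pdy at e ⊢
  simp only [] at e ⊢
  rw [e]
  ring

theorem ptwise {L l : ℝ} (hL : 0 < L) {v : ℝ × ℝ → ℝ} (hv : ContDiff ℝ (⊤ : ℕ∞) v)
    (p : ℝ × ℝ) (hp : |p.1| ≤ L) :
    (pdx v p)^2 ≤ 6*L^2*(lap v p - l^2 * v p)^2 + (pdx (PP L l v) p + pdy (QQ v) p) := by
  obtain ⟨x, y⟩ := p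
  have h := alg_main (a := pdx v (x,y)) (g := lap v (x,y) - l^2 * v (x,y)) (v := v (x,y)) hL hp
  rw [pdx_PP L l hv, pdy_QQ hv, pd_comm hv]
  refine h.trans (le_of_eq ?_)
  unfold lap
  ring

theorem deriv_zero_of_Icc {a b : ℝ} (hab : a < b) {h : ℝ → ℝ} (h0 : ∀ t ∈ Icc a b, h t = 0)
    {t D : ℝ} (ht : t ∈ Icc a b) (hD : HasDerivAt h D t) : D = 0 := by
  have h1 : HasDerivWithinAt h 0 (Icc a b) t :=
    (hasDerivWithinAt_const t (Icc a b) (0:ℝ)).congr (fun s hs => h0 s hs) (h0 t ht)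
  exact (uniqueDiffOn_Icc hab t ht).eq_deriv _ hD.hasDerivWithinAt h1

theorem fd_split {v : ℝ × ℝ → ℝ} (hv : ContDiff ℝ (⊤ : ℕ∞) v) (p : ℝ × ℝ) (a b : ℝ) :
    fderiv ℝ v p (a, b) = a * pdx v p + b * pdy v p := by
  rw [pdx_fd hv, pdy_fd hv]
  have : ((a, b) : ℝ × ℝ) = a • ((1:ℝ), (0:ℝ)) + b • ((0:ℝ), (1:ℝ)) := by simp
  rw [this, map_add, map_smul, map_smul]; simp

theorem arc {α β : ℝ} (hα : 0 < α) (hβ : 0 < β) {v : ℝ × ℝ → ℝ}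
    (hv : ContDiff ℝ (⊤ : ℕ∞) v) (h0 : ∀ p ∈ StadiumBoundary α β, v p = 0)
    {e : ℝ} (he : e = 1 ∨ e = -1) {θ : ℝ} (hθ : θ ∈ Icc (-(π/2)) (π/2)) :
    v (e * (α + β * cos θ), β * sin θ) = 0 ∧
    e * (-sin θ) * pdx v (e * (α + β * cos θ), β * sin θ)
      + cos θ * pdy v (e * (α + β * cos θ), β * sin θ) = 0 := by
  have hz : ∀ t ∈ Icc (-(π/2)) (π/2), v (e * (α + β * cos t), β * sin t) = 0 := by
    intro t ht
    have hcos := cos_nonneg_of_mem_Icc ht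
    have hp : 0 ≤ β * cos t := by positivity
    have habs : |e * (α + β * cos t)| = α + β * cos t := by
      rw [abs_mul]
      rcases he with rfl | rfl <;> simp [abs_of_nonneg (show 0 ≤ α + β * cos t by linarith)]
    refine h0 _ (Or.inr ⟨?_, ?_⟩)
    · simp only [habs]; nlinarith [sin_sq_add_cos_sq t]
    · simp only [habs]; linarith
  refine ⟨hz θ hθ, ?_⟩
  have hd : HasDerivAt (fun t => (e * (α + β * cos t), β * sin t))
      (e * (β * (-sin θ)), β * cos θ) θ :=
    ((((hasDerivAt_cos θ).const_mul β).const_add α).const_mul e).prodMk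
      ((hasDerivAt_sin θ).const_mul β)
  have h2 := (sm_diff hv (e * (α + β * cos θ), β * sin θ)).hasFDerivAt.comp_hasDerivAt θ hd
  have h3 := deriv_zero_of_Icc (by linarith [pi_pos]) hz hθ h2
  rw [fd_split hv] at h3
  have : β * (e * (-sin θ) * pdx v (e * (α + β * cos θ), β * sin θ)
      + cos θ * pdy v (e * (α + β * cos θ), β * sin θ)) = 0 := by linarith
  exact (mul_eq_zero.1 this).resolve_left hβ.ne'

theorem flux {L l β c s e : ℝ} {v : ℝ × ℝ → ℝ} {p : ℝ × ℝ} (hcs : s^2 + c^2 = 1)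
    (he : e = 1 ∨ e = -1) (h0 : v p = 0) (ht : e * (-s) * pdx v p + c * pdy v p = 0) :
    e * PP L l v p * (β * c) + QQ v p * (β * s)
      = β * (e * p.1) * c * (nderiv v p (e * c, s))^2 := by
  unfold PP QQ nderiv
  simp only [h0]
  have he2 : e^2 = 1 := by rcases he with rfl | rfl <;> norm_num
  set N := e * c * pdx v p + s * pdy v p with hN
  have hx : pdx v p = e * c * N := by
    have : pdx v p * e^2 * (s^2 + c^2) = e * c * N - e * s * (e * (-s) * pdx v p + c * pdy v p) := by
      rw [hN]; ring
    rw [he2, hcs, ht] at this; linarith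
  have hy : pdy v p = s * N := by
    have : pdy v p * (s^2 + c^2) = s * N + c * (e * (-s) * pdx v p + c * pdy v p) := by
      rw [hN]; ring
    rw [hcs, ht] at this; linarith
  rw [hx, hy]
  rcases he with rfl | rfl
  · linear_combination β * p.1 * c * N^2 * hcs
  · linear_combination -β * p.1 * c * N^2 * hcs

theorem core {α β : ℝ} (hα : 0 < α) (hβ : 0 < β) {v : ℝ × ℝ → ℝ} (l : ℝ)
    (hv : ContDiff ℝ (⊤ : ℕ∞) v) (h0 : ∀ p ∈ StadiumBoundary α β, v p = 0) :
    (∫ p in Stadium α β, (pdx v p)^2) ≤ 6*(α+β)^2 * (∫ p in Stadium α β, (lap v p - l^2 * v p)^2)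
      + (α+β)/β * bdryIntW α β (fun p n => (|p.1| - α) * (nderiv v p n)^2) := by
  have hL : 0 < α + β := by linarith
  have hc := stad_compact hα hβ
  have cx := (sm_pdx hv).continuous
  have cy := (sm_pdy hv).continuous
  have cxx := (sm_pdx (sm_pdx hv)).continuous
  have cyy := (sm_pdy (sm_pdy hv)).continuous
  have cv := hv.continuous
  have sP := sm_PP (α+β) l hv
  have sQ := sm_QQ hv
  have cP := (sm_pdx sP).continuous
  have cQ := (sm_pdy sQ).continuous
  have cg : Continuous (fun p => (lap v p - l^2 * v p)^2) := by unfold lap; fun_prop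
  have io : ∀ {G : ℝ × ℝ → ℝ}, Continuous G → IntegrableOn G (Stadium α β) :=
    fun h => h.continuousOn.integrableOn_compact hc
  have step1 : (∫ p in Stadium α β, (pdx v p)^2) ≤
      ∫ p in Stadium α β, (6*(α+β)^2*(lap v p - l^2 * v p)^2
        + (pdx (PP (α+β) l v) p + pdy (QQ v) p)) := by
    refine setIntegral_mono_on (io (by fun_prop)) (io (by fun_prop)) hc.measurableSet ?_
    intro p hp
    refine ptwise hL hv p ?_
    rw [stad_y hα hβ] at hp
    exact abs_le.2 hp.1
  refine step1.trans ?_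
  have i1 : IntegrableOn (fun p => 6*(α+β)^2*(lap v p - l^2 * v p)^2) (Stadium α β) :=
    io (by fun_prop)
  have i2 : IntegrableOn (fun p => pdx (PP (α+β) l v) p + pdy (QQ v) p) (Stadium α β) :=
    io (by fun_prop)
  rw [integral_add i1 i2, integral_add (io cP) (io cQ), integral_const_mul]
  have hQ0 : ∀ x ∈ Icc (-α) α, QQ v (x, β) = 0 ∧ QQ v (x, -β) = 0 := by
    have key : ∀ b, (b = β ∨ b = -β) → ∀ x ∈ Icc (-α) α, QQ v (x, b) = 0 := by
      intro b hb x hx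
      have hz : ∀ t ∈ Icc (-α) α, v (t, b) = 0 := fun t ht => h0 _ (Or.inl ⟨abs_le.2 ht, hb⟩)
      have := deriv_zero_of_Icc (by linarith) hz hx (hasx hv x b)
      unfold QQ
      rw [hz x hx, this]; ring
    exact fun x hx => ⟨key _ (Or.inl rfl) x hx, key _ (Or.inr rfl) x hx⟩
  rw [divx hα hβ sP, divy hα hβ sQ hQ0]
  have cPP := sP.continuous
  have cQQ := sQ.continuous
  gcongr
  rw [← intervalIntegral.integral_add]
  rotate_left
  · exact Continuous.intervalIntegrable (by fun_prop) _ _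
  · exact Continuous.intervalIntegrable (by fun_prop) _ _
  unfold bdryIntW
  rw [← mul_assoc, div_mul_cancel₀ _ hβ.ne', ← intervalIntegral.integral_const_mul]
  refine intervalIntegral.integral_mono_on (by linarith [pi_pos]) ?_ ?_ ?_
  · exact Continuous.intervalIntegrable (by fun_prop) _ _
  · unfold nderiv
    exact Continuous.intervalIntegrable (by fun_prop) _ _
  · intro θ hθ
    have hcos := cos_nonneg_of_mem_Icc hθ
    have hp : 0 ≤ β * cos θ := by positivity
    have hcs := sin_sq_add_cos_sq θ
    obtain ⟨a1, a2⟩ := arc hα hβ hv h0 (Or.inl rfl) hθ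
    obtain ⟨b1, b2⟩ := arc hα hβ hv h0 (Or.inr rfl) hθ
    have f1 := flux (L := α+β) (l := l) (β := β) hcs (Or.inl rfl) a1 a2
    have f2 := flux (L := α+β) (l := l) (β := β) hcs (Or.inr rfl) b1 b2
    simp only [one_mul, neg_mul, neg_neg] at f1 f2
    simp only [abs_neg]
    rw [abs_of_nonneg (show 0 ≤ α + β * cos θ by linarith)]
    set A := nderiv v (α + β * cos θ, β * sin θ) (cos θ, sin θ)
    set B := nderiv v (-(α + β * cos θ), β * sin θ) (-cos θ, sin θ)
    have hle : α + β * cos θ ≤ α + β := by nlinarith [cos_le_one θ]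
    have hm : (α + β * cos θ) * (β * cos θ * (A^2 + B^2)) ≤ (α + β) * (β * cos θ * (A^2 + B^2)) :=
      mul_le_mul_of_nonneg_right hle (by positivity)
    linarith

theorem pdx_congr {u v : ℝ × ℝ → ℝ} {p : ℝ × ℝ} (h : u =ᶠ[nhds p] v) :
    pdx u =ᶠ[nhds p] pdx v := by
  filter_upwards [eventually_eventually_nhds.2 h] with q hq
  unfold pdx
  refine EventuallyEq.deriv_eq ?_
  have : ContinuousAt (fun t : ℝ => (t, q.2)) q.1 := by fun_prop
  exact this.eventually (p := fun z => u z = v z) hq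

theorem pdy_congr {u v : ℝ × ℝ → ℝ} {p : ℝ × ℝ} (h : u =ᶠ[nhds p] v) :
    pdy u =ᶠ[nhds p] pdy v := by
  filter_upwards [eventually_eventually_nhds.2 h] with q hq
  unfold pdy
  refine EventuallyEq.deriv_eq ?_
  have : ContinuousAt (fun t : ℝ => (q.1, t)) q.2 := by fun_prop
  exact this.eventually (p := fun z => u z = v z) hq

theorem extend {u : ℝ × ℝ → ℝ} {S V : Set (ℝ × ℝ)} (hS : IsClosed S) (hV : IsOpen V)
    (hSV : S ⊆ V) (hu : ContDiffOn ℝ (⊤ : ℕ∞) u V) :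
    ∃ v : ℝ × ℝ → ℝ, ContDiff ℝ (⊤ : ℕ∞) v ∧ ∀ p ∈ S, u =ᶠ[nhds p] v := by
  obtain ⟨χ, h0, h1, -⟩ := exists_contMDiffMap_zero_one_nhds_of_isClosed (n := (⊤ : ℕ∞))
    (modelWithCornersSelf ℝ (ℝ × ℝ)) hV.isClosed_compl hS
    (by rw [disjoint_compl_left_iff_subset]; exact hSV)
  have hχ : ContDiff ℝ (⊤ : ℕ∞) χ := χ.contMDiff.contDiff
  refine ⟨fun p => χ p * u p, ?_, ?_⟩
  · rw [contDiff_iff_contDiffAt]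
    intro p
    by_cases hp : p ∈ V
    · exact hχ.contDiffAt.mul (hu.contDiffAt (hV.mem_nhds hp))
    · have := eventually_nhdsSet_iff_forall.1 h0 p hp
      refine (contDiffAt_const (c := (0:ℝ))).congr_of_eventuallyEq ?_
      filter_upwards [this] with q hq
      simp [hq]
  · intro p hp
    filter_upwards [eventually_nhdsSet_iff_forall.1 h1 p hp] with q hq
    simp [hq]

/-- there is `C > 0` depending only on `α, β` such that every real Dirichlet
quasimode datum satisfies
`∫_S (∂_x u)² dA ≤ C ∫_{∂S ∩ W} w |∂_N u|² dl + C ‖f‖²_{L²(S)}`. -/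
theorem stmt11 (α β : ℝ) (hα : 0 < α) (hβ : 0 < β) :
    ∃ C > 0, ∀ d : QMDatum α β,
      (∫ p in Stadium α β, (pdx d.u p) ^ 2) ≤
        C * bdryIntW α β (fun p n => (|p.1| - α) * (nderiv d.u p n) ^ 2) +
        C * (∫ p in Stadium α β, (d.f p) ^ 2) := by
  have hL : 0 < α + β := by linarith
  refine ⟨6*(α+β)^2 + (α+β)/β, by positivity, fun d => ?_⟩
  have hc := stad_compact hα hβ
  obtain ⟨V, hV, hSV, hu⟩ := d.smooth
  obtain ⟨v, hv, huv⟩ := extend hc.isClosed hV hSV hu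
  have hBS : ∀ p ∈ StadiumBoundary α β, p ∈ Stadium α β := by
    rintro ⟨x, y⟩ (⟨h1, h2⟩ | ⟨h1, h2⟩)
    · refine Or.inl ⟨abs_le.1 h1, ?_⟩
      rcases h2 with h2 | h2 <;> simp only at h2 <;> subst h2 <;>
        exact ⟨by linarith, by linarith⟩
    · simp only at h1 h2
      rcases abs_cases x with ⟨h, h'⟩ | ⟨h, h'⟩ <;> rw [h] at h1 h2
      · exact Or.inr (Or.inl ⟨h1.le, h2⟩)
      · refine Or.inr (Or.inr ⟨?_, ?_⟩)
        · simp only; nlinarith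
        · simp only; linarith
  have h0 : ∀ p ∈ StadiumBoundary α β, v p = 0 := fun p hp => by
    rw [← (huv p (hBS p hp)).eq_of_nhds]; exact d.dirichlet p hp
  have key := core hα hβ d.lam hv h0
  have e1 : (∫ p in Stadium α β, (pdx d.u p)^2) = ∫ p in Stadium α β, (pdx v p)^2 :=
    setIntegral_congr_fun hc.measurableSet fun p hp => by
      simp only [(pdx_congr (huv p hp)).eq_of_nhds]
  have e2 : (∫ p in Stadium α β, (d.f p)^2)
      = ∫ p in Stadium α β, (lap v p - d.lam^2 * v p)^2 :=
    setIntegral_congr_fun hc.measurableSet fun p hp => by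
      simp only [← d.eqn p hp, lap, (pdx_congr (pdx_congr (huv p hp))).eq_of_nhds,
        (pdy_congr (pdy_congr (huv p hp))).eq_of_nhds, (huv p hp).eq_of_nhds]
  have hm : ∀ θ ∈ Icc (-(π/2)) (π/2), 0 ≤ β * cos θ ∧
      (α + β * cos θ, β * sin θ) ∈ Stadium α β ∧ (-(α + β * cos θ), β * sin θ) ∈ Stadium α β := by
    intro θ hθ
    have hp : 0 ≤ β * cos θ := mul_nonneg hβ.le (cos_nonneg_of_mem_Icc hθ)
    refine ⟨hp, Or.inr (Or.inl ⟨?_, ?_⟩), Or.inr (Or.inr ⟨?_, ?_⟩)⟩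
    · simp only; nlinarith [sin_sq_add_cos_sq θ]
    · simp only; linarith
    · simp only; nlinarith [sin_sq_add_cos_sq θ]
    · simp only; linarith
  have hpi : -(π/2) ≤ π/2 := by linarith [pi_pos]
  have e3 : bdryIntW α β (fun p n => (|p.1| - α) * (nderiv d.u p n) ^ 2)
      = bdryIntW α β (fun p n => (|p.1| - α) * (nderiv v p n) ^ 2) := by
    unfold bdryIntW
    congr 1
    refine intervalIntegral.integral_congr fun θ hθ => ?_
    rw [uIcc_of_le hpi] at hθ
    obtain ⟨-, h1, h2⟩ := hm θ hθ
    simp only [nderiv, (pdx_congr (huv _ h1)).eq_of_nhds, (pdy_congr (huv _ h1)).eq_of_nhds,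
      (pdx_congr (huv _ h2)).eq_of_nhds, (pdy_congr (huv _ h2)).eq_of_nhds]
  have hB : 0 ≤ bdryIntW α β (fun p n => (|p.1| - α) * (nderiv v p n) ^ 2) := by
    unfold bdryIntW
    refine mul_nonneg hβ.le (intervalIntegral.integral_nonneg hpi fun θ hθ => ?_)
    have hp := (hm θ hθ).1
    simp only [abs_neg]
    rw [abs_of_nonneg (show 0 ≤ α + β * cos θ by linarith)]
    have : 0 ≤ α + β * cos θ - α := by linarith
    positivity
  have hF : 0 ≤ ∫ p in Stadium α β, (lap v p - d.lam^2 * v p)^2 :=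
    integral_nonneg fun p => sq_nonneg _
  rw [e1, e2, e3]
  have a1 : 0 ≤ (α+β)/β := by positivity
  have a2 : 0 ≤ 6*(α+β)^2 := by positivity
  nlinarith [mul_nonneg a1 hF, mul_nonneg a2 hB]
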